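/- arXiv:1904.02993 — 2 statements merged into one kernel-verified Lean document; each statement's English description precedes it below -/
import Mathlib

section
/- Let m ≥ 2 and let v : ℝⁿ → ℝᵐ be a map. Then the following are equivalent: (a) for every δ > 0, every subset A ⊆ ℝⁿ, and every 1-Lipschitz map u : A → ℝᵐ with ‖v(x) − u(x)‖ ≤ δ for all x ∈ A, there exists a 1-Lipschitz map ũ : ℝⁿ → ℝᵐ with ũ(x) = u(x) for all x ∈ A and ‖v(x) − ũ(x)‖ ≤ δ for all x ∈ ℝⁿ; (b) v is affine and 1-Lipschitz. -/
lemma aux_double {ι F : Type*} [Fintype ι] [NormedAddCommGroup F] [InnerProductSpace ℝ F]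
    (c : ι → ℝ) (U : ι → F) :
    ∑ i, ∑ j, c i * c j * ‖U i - U j‖ ^ 2
      = 2 * ((∑ i, c i) * (∑ i, c i * ‖U i‖ ^ 2) - ‖∑ i, c i • U i‖ ^ 2) := by
  have h1 : ‖∑ i, c i • U i‖ ^ 2 = ∑ i, ∑ j, c i * c j * inner ℝ (U i) (U j) := by
    rw [← real_inner_self_eq_norm_sq, sum_inner]
    refine Finset.sum_congr rfl fun i _ => ?_
    rw [inner_sum]
    refine Finset.sum_congr rfl fun j _ => ?_
    rw [real_inner_smul_left, real_inner_smul_right]; ring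
  have h2 : (∑ i, c i) * (∑ i, c i * ‖U i‖ ^ 2) = ∑ i, ∑ j, c i * c j * ‖U j‖ ^ 2 := by
    rw [Finset.sum_mul_sum]
    refine Finset.sum_congr rfl fun i _ => Finset.sum_congr rfl fun j _ => by ring
  have h3 : (∑ i, c i) * (∑ i, c i * ‖U i‖ ^ 2) = ∑ i, ∑ j, c i * c j * ‖U i‖ ^ 2 := by
    rw [h2, Finset.sum_comm]
    refine Finset.sum_congr rfl fun i _ => Finset.sum_congr rfl fun j _ => by ring
  have h4 : 2 * ((∑ i, c i) * (∑ i, c i * ‖U i‖ ^ 2) - ‖∑ i, c i • U i‖ ^ 2)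
     = (∑ i, c i) * (∑ i, c i * ‖U i‖ ^ 2) + (∑ i, c i) * (∑ i, c i * ‖U i‖ ^ 2)
       - 2 * ‖∑ i, c i • U i‖ ^ 2 := by ring
  rw [h4]
  nth_rewrite 1 [h2]
  rw [h3, h1, Finset.mul_sum, ← Finset.sum_add_distrib, ← Finset.sum_sub_distrib]
  refine Finset.sum_congr rfl fun i _ => ?_
  rw [Finset.mul_sum, ← Finset.sum_add_distrib, ← Finset.sum_sub_distrib]
  refine Finset.sum_congr rfl fun j _ => ?_
  rw [norm_sub_sq_real]; ring

lemma aux_key {ι E F : Type*} [Fintype ι] [NormedAddCommGroup F] [InnerProductSpace ℝ F]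
    [NormedAddCommGroup E] [InnerProductSpace ℝ E]
    (T : E →ₗ[ℝ] F) (hT : ∀ y, ‖T y‖ ≤ ‖y‖) (δ : ℝ)
    (c : ι → ℝ) (hc : ∀ i, 0 ≤ c i) (c0 : ℝ) (hc0 : 0 ≤ c0) (hsum : c0 + ∑ i, c i = 1)
    (X : ι → E) (U : ι → F) (hXU : ∀ i j, ‖U i - U j‖ ≤ ‖X i - X j‖)
    (hδ : ∀ i, ‖U i - T (X i)‖ ≤ δ) :
    ∑ i, c i * ‖U i‖ ^ 2 - ‖∑ i, c i • U i‖ ^ 2 ≤ ∑ i, c i * ‖X i‖ ^ 2 + c0 * δ ^ 2 := by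
  have hs0 : 0 ≤ ∑ i, c i := Finset.sum_nonneg fun i _ => hc i
  rcases hs0.eq_or_lt with hs | hs
  · have hz : ∀ i, c i = 0 := fun i =>
      (Finset.sum_eq_zero_iff_of_nonneg (fun i _ => hc i)).1 hs.symm i (Finset.mem_univ i)
    simp only [hz]; simp; positivity
  have e1 := aux_double c U
  have e2 := aux_double c X
  have e3 := aux_double c (fun i => U i - T (X i))
  have l1 : ∑ i, ∑ j, c i * c j * ‖U i - U j‖ ^ 2 ≤ ∑ i, ∑ j, c i * c j * ‖X i - X j‖ ^ 2 := by
    refine Finset.sum_le_sum fun i _ => Finset.sum_le_sum fun j _ => ?_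
    have := hXU i j
    have := hc i
    have := hc j
    gcongr
  have l3 : 0 ≤ ∑ i, ∑ j, c i * c j * ‖(U i - T (X i)) - (U j - T (X j))‖ ^ 2 := by
    refine Finset.sum_nonneg fun i _ => Finset.sum_nonneg fun j _ => ?_
    have := hc i
    have := hc j
    positivity
  have l4 : ∑ i, c i * ‖U i - T (X i)‖ ^ 2 ≤ (∑ i, c i) * δ ^ 2 := by
    rw [Finset.sum_mul]
    refine Finset.sum_le_sum fun i _ => ?_
    have := hδ i
    have := hc i
    gcongr
  have e5 : ∑ i, c i • (U i - T (X i)) = (∑ i, c i • U i) - T (∑ i, c i • X i) := by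
    simp [smul_sub, Finset.sum_sub_distrib, map_sum]
  have l6 := hT (∑ i, c i • X i)
  rw [e5] at e3
  set S := ∑ i, c i • X i
  set w := ∑ i, c i • U i
  set s := ∑ i, c i
  set a := ∑ i, c i * ‖U i‖ ^ 2
  set b := ∑ i, c i * ‖X i‖ ^ 2
  have l7 : ‖T S‖ ^ 2 ≤ ‖S‖ ^ 2 := by gcongr
  have l8 : ‖w - T S‖ ^ 2 ≤ s * (s * δ ^ 2) := by nlinarith
  have hc0' : c0 = 1 - s := by linarith
  have hs1 : s ≤ 1 := by linarith
  -- convexity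
  have l9 : 0 ≤ ‖(1 - s) • w - T S‖ ^ 2 := by positivity
  have l10 : ‖(1 - s) • w - T S‖ ^ 2 = (1 - s) ^ 2 * ‖w‖ ^ 2 - 2 * (1 - s) * inner ℝ w (T S) + ‖T S‖ ^ 2 := by
    rw [norm_sub_sq_real, norm_smul, real_inner_smul_left, Real.norm_eq_abs, mul_pow, sq_abs]; ring
  have l11 := norm_sub_sq_real w (T S)
  have l12 : s * a - ‖w‖ ^ 2 ≤ s * b - ‖S‖ ^ 2 := by linarith
  -- s² Q ≤ 0
  have l13 : s ^ 2 * (a - ‖w‖ ^ 2 - b - c0 * δ ^ 2) ≤ 0 := by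
    have m1 : s * (s * a - ‖w‖ ^ 2) ≤ s * (s * b - ‖T S‖ ^ 2) := by
      apply mul_le_mul_of_nonneg_left _ hs0; linarith
    have m2 : (1 - s) * ‖w - T S‖ ^ 2 ≤ (1 - s) * (s * (s * δ ^ 2)) :=
      mul_le_mul_of_nonneg_left l8 (by linarith)
    rw [hc0']
    rw [l11] at m2
    rw [l10] at l9
    nlinarith
  have : a - ‖w‖ ^ 2 - b - c0 * δ ^ 2 ≤ 0 := by
    by_contra h
    push Not at h
    have : 0 < s ^ 2 * (a - ‖w‖ ^ 2 - b - c0 * δ ^ 2) := by positivity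
    linarith
  linarith

lemma aux_minimax {ι F : Type*} [Fintype ι] [Nonempty ι] [AddCommGroup F] [Module ℝ F]
    (f : ι → F → ℝ) (hf : ∀ i, ConvexOn ℝ Set.univ (f i))
    (h : ∀ w, ∃ i, 0 ≤ f i w) :
    ∃ c : ι → ℝ, (∀ i, 0 ≤ c i) ∧ ∑ i, c i = 1 ∧ ∀ w, 0 ≤ ∑ i, c i * f i w := by
  classical
  let s : Set (ι → ℝ) := Set.pi Set.univ (fun _ => Set.Iio 0)
  let t : Set (ι → ℝ) := {y | ∃ w, ∀ i, f i w ≤ y i}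
  have hs1 : Convex ℝ s := convex_pi fun i _ => convex_Iio 0
  have hs2 : IsOpen s := isOpen_set_pi Set.finite_univ fun i _ => isOpen_Iio
  have ht : Convex ℝ t := by
    rintro y ⟨w, hw⟩ y' ⟨w', hw'⟩ a b ha hb hab
    refine ⟨a • w + b • w', fun i => ?_⟩
    have h1 := (hf i).2 (Set.mem_univ w) (Set.mem_univ w') ha hb hab
    have h2 := mul_le_mul_of_nonneg_left (hw i) ha
    have h3 := mul_le_mul_of_nonneg_left (hw' i) hb
    simp only [smul_eq_mul] at h1
    simp only [Pi.add_apply, Pi.smul_apply, smul_eq_mul]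
    linarith
  have hd : Disjoint s t := by
    rw [Set.disjoint_left]
    rintro y hy ⟨w, hw⟩
    obtain ⟨i, hi⟩ := h w
    have := hy i (Set.mem_univ i)
    simp only [Set.mem_Iio] at this
    linarith [hw i]
  obtain ⟨φ, u, h1, h2⟩ := geometric_hahn_banach_open hs1 hs2 ht hd
  have hφ : ∀ y : ι → ℝ, φ y = ∑ i, φ (Pi.single i 1) * y i := by
    intro y
    have : y = ∑ i, y i • (Pi.single i (1:ℝ) : ι → ℝ) := by
      ext j; simp [Finset.sum_apply, Pi.single_apply]
    conv_lhs => rw [this]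
    rw [map_sum]
    refine Finset.sum_congr rfl fun i _ => ?_
    rw [map_smul, smul_eq_mul, mul_comm]
  have hcl : ∀ y : ι → ℝ, (∀ i, y i ≤ 0) → φ y ≤ u := by
    intro y hy
    have hlim : Filter.Tendsto (fun ε : ℝ => φ (fun i => y i - ε)) (nhdsWithin 0 (Set.Ioi 0)) (nhds (φ y)) := by
      have : Continuous (fun ε : ℝ => φ (fun i => y i - ε)) := by fun_prop
      have h := this.tendsto 0
      simp only [sub_zero] at h
      exact h.mono_left nhdsWithin_le_nhds
    refine le_of_tendsto hlim ?_
    filter_upwards [self_mem_nhdsWithin] with ε hε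
    refine (h1 _ fun i _ => ?_).le
    have : (0:ℝ) < ε := hε
    have := hy i
    simp only [Set.mem_Iio]; linarith
  have hu : 0 ≤ u := by simpa using hcl 0 (by simp)
  have hc : ∀ i, 0 ≤ φ (Pi.single i 1) := by
    intro i
    by_contra hneg
    push Not at hneg
    have := hcl (-((u + 1) / (-φ (Pi.single i 1))) • Pi.single i 1) (by
      intro j
      have : 0 ≤ (u + 1) / (-φ (Pi.single i 1)) := div_nonneg (by linarith) (by linarith)
      by_cases hj : j = i
      · subst hj; simp; linarith
      · simp [hj])
    rw [map_smul, smul_eq_mul] at this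
    have e : -((u + 1) / (-φ (Pi.single i 1))) * φ (Pi.single i 1) = u + 1 := by
      have hne := hneg.ne
      field_simp
      try exact div_self hne
    linarith
  have hft : ∀ w, 0 ≤ ∑ i, φ (Pi.single i 1) * f i w := by
    intro w
    rw [← hφ (fun i => f i w)]
    exact hu.trans (h2 _ ⟨w, fun i => le_rfl⟩)
  have hpos : 0 < ∑ i, φ (Pi.single i 1) := by
    refine lt_of_le_of_ne (Finset.sum_nonneg fun i _ => hc i) fun h0 => ?_
    have hz : ∀ i, φ (Pi.single i 1) = 0 := fun i =>
      (Finset.sum_eq_zero_iff_of_nonneg (fun i _ => hc i)).1 h0.symm i (Finset.mem_univ i)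
    have a1 := h1 (fun _ => -1) (fun i _ => by simp)
    have a2 := h2 (fun i => f i 0) ⟨0, fun i => le_rfl⟩
    rw [hφ] at a1 a2
    simp only [hz] at a1 a2
    simp at a1 a2
    linarith
  refine ⟨fun i => φ (Pi.single i 1) / ∑ i, φ (Pi.single i 1), fun i => div_nonneg (hc i) hpos.le,
    ?_, fun w => ?_⟩
  · rw [← Finset.sum_div, div_self hpos.ne']
  · have : ∑ i, φ (Pi.single i 1) / (∑ i, φ (Pi.single i 1)) * f i w
        = (∑ i, φ (Pi.single i 1) * f i w) / ∑ i, φ (Pi.single i 1) := by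
      rw [Finset.sum_div]
      refine Finset.sum_congr rfl fun i _ => by ring
    rw [this]
    exact div_nonneg (hft w) hpos.le

lemma aux_convex {F : Type*} [NormedAddCommGroup F] [InnerProductSpace ℝ F] (p : F) (k : ℝ) :
    ConvexOn ℝ Set.univ (fun w : F => ‖w - p‖ ^ 2 - k) := by
  refine ⟨convex_univ, fun x _ y _ a b ha hb hab => ?_⟩
  have hb' : b = 1 - a := by linarith
  subst hb'
  have e : a • x + (1 - a) • y - p = a • (x - p) + (1 - a) • (y - p) := by module
  have h2 := norm_sub_sq_real (x - p) (y - p)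
  have h3 : ‖a • (x - p) + (1 - a) • (y - p)‖ ^ 2 = a ^ 2 * ‖x - p‖ ^ 2
      + 2 * a * (1 - a) * inner ℝ (x - p) (y - p) + (1 - a) ^ 2 * ‖y - p‖ ^ 2 := by
    rw [norm_add_sq_real, norm_smul, norm_smul, real_inner_smul_left, real_inner_smul_right,
      Real.norm_eq_abs, Real.norm_eq_abs, mul_pow, mul_pow, sq_abs, sq_abs]; ring
  have h4 : 0 ≤ a * (1 - a) * ‖(x - p) - (y - p)‖ ^ 2 := by positivity
  simp only [smul_eq_mul]
  rw [e, h3]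
  rw [h2] at h4
  nlinarith

lemma aux_finite {ι E F : Type*} [Fintype ι] [NormedAddCommGroup F] [InnerProductSpace ℝ F]
    [NormedAddCommGroup E] [InnerProductSpace ℝ E]
    (T : E →ₗ[ℝ] F) (hT : ∀ y, ‖T y‖ ≤ ‖y‖) (δ : ℝ)
    (X : ι → E) (U : ι → F) (hXU : ∀ i j, ‖U i - U j‖ ≤ ‖X i - X j‖)
    (hδ : ∀ i, ‖U i - T (X i)‖ ≤ δ) (ε : ℝ) (hε : 0 < ε) :
    ∃ w : F, ‖w‖ ^ 2 ≤ δ ^ 2 + ε ∧ ∀ i, ‖w - U i‖ ^ 2 ≤ ‖X i‖ ^ 2 + ε := by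
  by_contra hcon
  push Not at hcon
  let p : Option ι → F := fun o => o.elim 0 U
  let r : Option ι → ℝ := fun o => o.elim (δ ^ 2 + ε) (fun i => ‖X i‖ ^ 2 + ε)
  obtain ⟨c, hc, hsum, hw⟩ := aux_minimax (fun o w => ‖w - p o‖ ^ 2 - r o)
    (fun o => aux_convex _ _) (by
      intro w
      by_cases h : ‖w‖ ^ 2 ≤ δ ^ 2 + ε
      · obtain ⟨i, hi⟩ := hcon w h
        exact ⟨some i, by simp only [p, r, Option.elim]; linarith⟩
      · exact ⟨none, by simp only [p, r, Option.elim, sub_zero]; linarith⟩)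
  rw [Fintype.sum_option] at hsum
  have key := aux_key T hT δ (fun i => c (some i)) (fun i => hc _) (c none) (hc _) hsum X U hXU hδ
  have h0 := hw (∑ i, c (some i) • U i)
  rw [Fintype.sum_option] at h0
  simp only [p, r, Option.elim, sub_zero] at h0
  set w := ∑ i, c (some i) • U i with hwdef
  have e1 : ∑ i, c (some i) * (‖w - U i‖ ^ 2 - (‖X i‖ ^ 2 + ε))
      = (∑ i, c (some i)) * (‖w‖ ^ 2 - ε) - 2 * ‖w‖ ^ 2
        + ∑ i, c (some i) * ‖U i‖ ^ 2 - ∑ i, c (some i) * ‖X i‖ ^ 2 := by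
    have e2 : ‖w‖ ^ 2 = ∑ i, c (some i) * inner ℝ w (U i) := by
      rw [← real_inner_self_eq_norm_sq]
      nth_rewrite 2 [hwdef]
      rw [inner_sum]
      refine Finset.sum_congr rfl fun j _ => ?_
      rw [real_inner_smul_right]
    have e3 : 2 * ‖w‖ ^ 2 = ∑ i, 2 * (c (some i) * inner ℝ w (U i)) := by
      rw [← Finset.mul_sum, ← e2]
    rw [e3, Finset.sum_mul, ← Finset.sum_sub_distrib, ← Finset.sum_add_distrib,
      ← Finset.sum_sub_distrib]
    refine Finset.sum_congr rfl fun j _ => ?_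
    rw [norm_sub_sq_real]; ring
  rw [e1] at h0
  have hs : ∑ i, c (some i) = 1 - c none := by linarith
  rw [hs] at h0
  nlinarith

lemma aux_onepoint {ι E F : Type*} [NormedAddCommGroup F] [InnerProductSpace ℝ F]
    [ProperSpace F] [NormedAddCommGroup E] [InnerProductSpace ℝ E]
    (T : E →ₗ[ℝ] F) (hT : ∀ y, ‖T y‖ ≤ ‖y‖) (δ : ℝ) (hδ0 : 0 ≤ δ)
    (X : ι → E) (U : ι → F) (hXU : ∀ i j, ‖U i - U j‖ ≤ ‖X i - X j‖)
    (hδ : ∀ i, ‖U i - T (X i)‖ ≤ δ) :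
    ∃ w : F, ‖w‖ ≤ δ ∧ ∀ i, ‖w - U i‖ ≤ ‖X i‖ := by
  classical
  let K : Finset ι × ℕ → Set F := fun q =>
    {w | ‖w‖ ^ 2 ≤ δ ^ 2 + 1 / ((q.2 : ℝ) + 1)} ∩
      ⋂ i ∈ q.1, {w | ‖w - U i‖ ^ 2 ≤ ‖X i‖ ^ 2 + 1 / ((q.2 : ℝ) + 1)}
  have hKmem : ∀ q w, w ∈ K q ↔ ‖w‖ ^ 2 ≤ δ ^ 2 + 1 / ((q.2 : ℝ) + 1) ∧
      ∀ i ∈ q.1, ‖w - U i‖ ^ 2 ≤ ‖X i‖ ^ 2 + 1 / ((q.2 : ℝ) + 1) := by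
    intro q w; simp [K]
  have hclosed : ∀ q, IsClosed (K q) := by
    intro q
    refine IsClosed.inter (isClosed_le (by fun_prop) (by fun_prop)) ?_
    exact isClosed_biInter fun i _ => isClosed_le (by fun_prop) (by fun_prop)
  have hcomp : ∀ q, IsCompact (K q) := by
    intro q
    refine (isCompact_closedBall (0 : F) (δ + 1)).of_isClosed_subset (hclosed q) ?_
    intro w hw
    have h1 := ((hKmem q w).1 hw).1
    have h2 : 1 / ((q.2 : ℝ) + 1) ≤ 1 := by
      rw [div_le_one (by positivity)]
      have : (0:ℝ) ≤ q.2 := by positivity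
      linarith
    rw [mem_closedBall_zero_iff]
    refine le_of_sq_le_sq ?_ (by linarith)
    nlinarith
  have hne : ∀ q, (K q).Nonempty := by
    intro q
    obtain ⟨w, h1, h2⟩ := aux_finite T hT δ (fun i : q.1 => X i) (fun i => U i)
      (fun i j => hXU i j) (fun i => hδ i) (1 / ((q.2 : ℝ) + 1)) (by positivity)
    exact ⟨w, (hKmem q w).2 ⟨h1, fun i hi => h2 ⟨i, hi⟩⟩⟩
  have hanti : Antitone K := by
    intro q q' hqq w hw
    rw [hKmem] at hw ⊢
    have h1 : 1 / ((q'.2 : ℝ) + 1) ≤ 1 / ((q.2 : ℝ) + 1) := by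
      have : (q.2 : ℝ) ≤ q'.2 := by exact_mod_cast hqq.2
      gcongr
    exact ⟨by linarith [hw.1], fun i hi => by linarith [hw.2 i (hqq.1 hi)]⟩
  obtain ⟨w, hw⟩ := IsCompact.nonempty_iInter_of_directed_nonempty_isCompact_isClosed K
    hanti.directed_ge hne hcomp hclosed
  rw [Set.mem_iInter] at hw
  have hlim : ∀ a b : ℝ, (∀ k : ℕ, a ≤ b + 1 / ((k : ℝ) + 1)) → a ≤ b := by
    intro a b h
    have : Filter.Tendsto (fun k : ℕ => b + 1 / ((k : ℝ) + 1)) Filter.atTop (nhds (b + 0)) :=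
      tendsto_const_nhds.add tendsto_one_div_add_atTop_nhds_zero_nat
    rw [add_zero] at this
    exact ge_of_tendsto' this h
  refine ⟨w, ?_, fun i => ?_⟩
  · exact le_of_sq_le_sq (hlim _ _ fun k => ((hKmem (∅, k) w).1 (hw _)).1) hδ0
  · exact le_of_sq_le_sq (hlim _ _ fun k => ((hKmem ({i}, k) w).1 (hw _)).2 i (by simp))
      (norm_nonneg _)

lemma aux_extend {E F : Type*} [NormedAddCommGroup F] [InnerProductSpace ℝ F]
    [ProperSpace F] [NormedAddCommGroup E] [InnerProductSpace ℝ E]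
    (T : E →ₗ[ℝ] F) (hT : ∀ y, ‖T y‖ ≤ ‖y‖) (v : E → F) (hv : ∀ x y, v x - v y = T (x - y))
    (δ : ℝ) (hδ0 : 0 ≤ δ) (A : Set E) (u : E → F)
    (hu : ∀ x ∈ A, ∀ y ∈ A, ‖u x - u y‖ ≤ ‖x - y‖) (hδ : ∀ x ∈ A, ‖v x - u x‖ ≤ δ) :
    ∃ w : E → F, (∀ x y, ‖w x - w y‖ ≤ ‖x - y‖) ∧ (∀ x ∈ A, w x = u x) ∧
      ∀ x, ‖v x - w x‖ ≤ δ := by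
  let P : Set (Set (E × F)) := {G | (∀ p ∈ G, ∀ q ∈ G, ‖p.2 - q.2‖ ≤ ‖p.1 - q.1‖) ∧
    ∀ p ∈ G, ‖v p.1 - p.2‖ ≤ δ}
  have hG0 : (fun x => (x, u x)) '' A ∈ P := by
    constructor
    · rintro _ ⟨x, hx, rfl⟩ _ ⟨y, hy, rfl⟩; exact hu x hx y hy
    · rintro _ ⟨x, hx, rfl⟩; exact hδ x hx
  obtain ⟨G, hsub, hG⟩ := zorn_subset_nonempty P (by
    intro C hC hchain _
    refine ⟨⋃₀ C, ⟨?_, ?_⟩, fun s hs => Set.subset_sUnion_of_mem hs⟩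
    · rintro p ⟨s, hs, hp⟩ q ⟨t, ht, hq⟩
      rcases hchain.total hs ht with h | h
      · exact (hC ht).1 p (h hp) q hq
      · exact (hC hs).1 p hp q (h hq)
    · rintro p ⟨s, hs, hp⟩
      exact (hC hs).2 p hp) _ hG0
  have hGP := hG.prop
  have hall : ∀ x, ∃ y, (x, y) ∈ G := by
    intro x
    obtain ⟨w, h1, h2⟩ := aux_onepoint T hT δ hδ0 (fun p : G => p.1.1 - x) (fun p => p.1.2 - v x)
      (by
        intro i j
        simpa using hGP.1 i i.2 j j.2)
      (by
        intro i
        have := hGP.2 i i.2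
        rw [← hv, norm_sub_rev]
        simpa using this)
    refine ⟨v x + w, ?_⟩
    have hins : insert (x, v x + w) G ∈ P := by
      have hh : ∀ p ∈ G, ‖v x + w - p.2‖ ≤ ‖x - p.1‖ := by
        intro p hp
        have := h2 ⟨p, hp⟩
        rw [norm_sub_rev x]
        convert this using 2
        simp only; abel
      constructor
      · rintro p (rfl | hp) q (rfl | hq)
        · simp
        · exact hh q hq
        · rw [norm_sub_rev, norm_sub_rev p.1]; exact hh p hp
        · exact hGP.1 p hp q hq
      · rintro p (rfl | hp)
        · simpa using h1
        · exact hGP.2 p hp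
    exact hG.le_of_ge hins (Set.subset_insert _ _) (Set.mem_insert _ _)
  choose w hw using hall
  refine ⟨w, fun x y => hGP.1 _ (hw x) _ (hw y), fun x hx => ?_, fun x => hGP.2 _ (hw x)⟩
  have := hGP.1 _ (hw x) _ (hsub ⟨x, hx, rfl⟩)
  simp only [sub_self, norm_zero] at this
  exact sub_eq_zero.1 (norm_le_zero_iff.1 this)

lemma aux_linear {E F : Type*} [NormedAddCommGroup F] [InnerProductSpace ℝ F]
    [NormedAddCommGroup E] [InnerProductSpace ℝ E] (v : E → F)
    (ha : ∀ x y : E, ∀ t ∈ Set.Icc (0 : ℝ) 1,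
        v (t • x + (1 - t) • y) = t • v x + (1 - t) • v y)
    (hl : ∀ x y, ‖v x - v y‖ ≤ ‖x - y‖) :
    ∃ T : E →ₗ[ℝ] F, ∀ x y, v x - v y = T (x - y) := by
  have hmid : ∀ x y, v ((1/2 : ℝ) • (x + y)) = (1/2 : ℝ) • (v x + v y) := by
    intro x y
    have := ha x y (1/2) ⟨by norm_num, by norm_num⟩
    rw [show (1 - 1/2 : ℝ) = 1/2 by norm_num, ← smul_add, ← smul_add] at this
    exact this
  have hadd : ∀ x y, v (x + y) - v 0 = (v x - v 0) + (v y - v 0) := by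
    intro x y
    have h1 := hmid x y
    have h2 := hmid (x + y) 0
    rw [add_zero, h1] at h2
    have h3 := smul_right_injective F (show (1/2 : ℝ) ≠ 0 by norm_num) h2
    rw [eq_sub_of_add_eq h3.symm]; abel
  let g : E →+ F := ⟨⟨fun x => v x - v 0, by simp⟩, hadd⟩
  have hc : Continuous g := by
    have : LipschitzWith 1 v := LipschitzWith.of_dist_le_mul fun x y => by
      simpa [dist_eq_norm] using hl x y
    exact this.continuous.sub continuous_const
  refine ⟨(g.toRealLinearMap hc).toLinearMap, fun x y => ?_⟩
  rw [map_sub]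
  change _ = (v x - v 0) - (v y - v 0)
  abel

lemma aux_interp {F : Type*} [NormedAddCommGroup F] [InnerProductSpace ℝ F] (w a b : F)
    (t L : ℝ) (ht : t ∈ Set.Icc (0 : ℝ) 1) (ha : ‖w - a‖ ≤ (1 - t) * L) (hb : ‖w - b‖ ≤ t * L)
    (hab : ‖a - b‖ = L) : w = t • a + (1 - t) • b := by
  obtain ⟨ht0, ht1⟩ := ht
  have e : w - (t • a + (1 - t) • b) = t • (w - a) + (1 - t) • (w - b) := by module
  have h2 := norm_sub_sq_real (w - a) (w - b)
  have h3 : ‖t • (w - a) + (1 - t) • (w - b)‖ ^ 2 = t ^ 2 * ‖w - a‖ ^ 2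
      + 2 * t * (1 - t) * inner ℝ (w - a) (w - b) + (1 - t) ^ 2 * ‖w - b‖ ^ 2 := by
    rw [norm_add_sq_real, norm_smul, norm_smul, real_inner_smul_left, real_inner_smul_right,
      Real.norm_eq_abs, Real.norm_eq_abs, mul_pow, mul_pow, sq_abs, sq_abs]; ring
  rw [show (w - a) - (w - b) = b - a by abel, norm_sub_rev, hab] at h2
  have a2 : t * ‖w - a‖ ^ 2 ≤ t * ((1 - t) * L) ^ 2 := by gcongr
  have b2 : (1 - t) * ‖w - b‖ ^ 2 ≤ (1 - t) * (t * L) ^ 2 := by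
    have : 0 ≤ 1 - t := by linarith
    gcongr
  have h5 : ‖w - (t • a + (1 - t) • b)‖ ^ 2 ≤ 0 := by
    rw [e, h3]
    have : 2 * inner ℝ (w - a) (w - b) = ‖w - a‖ ^ 2 + ‖w - b‖ ^ 2 - L ^ 2 := by linarith
    have : 2 * t * (1 - t) * inner ℝ (w - a) (w - b)
      = t * (1 - t) * (‖w - a‖ ^ 2 + ‖w - b‖ ^ 2 - L ^ 2) := by rw [← this]; ring
    rw [this]; nlinarith
  have h6 : ‖w - (t • a + (1 - t) • b)‖ = 0 := by
    have := sq_nonneg ‖w - (t • a + (1 - t) • b)‖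
    exact pow_eq_zero_iff (two_ne_zero) |>.1 (le_antisymm h5 this)
  exact sub_eq_zero.1 (norm_eq_zero.1 h6)

lemma aux_perp (m : ℕ) (hm : 2 ≤ m) (e : EuclideanSpace ℝ (Fin m)) :
    ∃ f : EuclideanSpace ℝ (Fin m), ‖f‖ = 1 ∧ inner ℝ e f = 0 := by
  have h : (ℝ ∙ e)ᗮ ≠ ⊥ := by
    intro h
    have h1 := Submodule.finrank_add_finrank_orthogonal (ℝ ∙ e)
    rw [h, finrank_bot, finrank_euclideanSpace_fin] at h1
    have h2 := finrank_span_le_card (R := ℝ) ({e} : Set (EuclideanSpace ℝ (Fin m)))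
    simp only [Set.toFinset_singleton, Finset.card_singleton] at h2
    omega
  obtain ⟨f, hf, hf0⟩ := Submodule.exists_mem_ne_zero_of_ne_bot h
  have h1 := Submodule.mem_orthogonal_singleton_iff_inner_right.1 hf
  refine ⟨‖f‖⁻¹ • f, ?_, ?_⟩
  · rw [norm_smul, norm_inv, norm_norm, inv_mul_cancel₀ (norm_ne_zero_iff.2 hf0)]
  · rw [real_inner_smul_right, h1, mul_zero]

lemma aux_stretch {F : Type*} [NormedAddCommGroup F] [InnerProductSpace ℝ F] (d f : F)
    (L : ℝ) (hf : ‖f‖ = 1) (hd : ‖d‖ ≤ L) : ∃ s : ℝ, ‖d + s • f‖ = L := by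
  have hL : 0 ≤ L := (norm_nonneg d).trans hd
  have hc : Continuous fun s : ℝ => ‖d + s • f‖ := by fun_prop
  have := intermediate_value_Icc (show (0:ℝ) ≤ L + ‖d‖ by positivity) hc.continuousOn
  obtain ⟨s, _, hs⟩ := this (show L ∈ _ from ⟨by simpa using hd, by
    have h1 := norm_sub_le (d + (L + ‖d‖) • f) d
    rw [add_sub_cancel_left, norm_smul, hf, mul_one, Real.norm_eq_abs,
      abs_of_nonneg (by positivity)] at h1
    linarith⟩)
  exact ⟨s, hs⟩

lemma aux_pyth {F : Type*} [NormedAddCommGroup F] [InnerProductSpace ℝ F] (e f : F) (a b : ℝ)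
    (hf : ‖f‖ = 1) (hef : inner ℝ e f = 0) : ‖a • e + b • f‖ ^ 2 = a ^ 2 * ‖e‖ ^ 2 + b ^ 2 := by
  rw [norm_add_sq_real, norm_smul, norm_smul, real_inner_smul_left, real_inner_smul_right, hef, hf,
    Real.norm_eq_abs, Real.norm_eq_abs, mul_pow, sq_abs, mul_one, sq_abs]; ring

theorem stmt_9 (n m : ℕ) (hm : 2 ≤ m)
    (v : EuclideanSpace ℝ (Fin n) → EuclideanSpace ℝ (Fin m)) :
    (∀ δ : ℝ, 0 < δ → ∀ A : Set (EuclideanSpace ℝ (Fin n)),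
      ∀ u : EuclideanSpace ℝ (Fin n) → EuclideanSpace ℝ (Fin m),
        (∀ x ∈ A, ∀ y ∈ A, ‖u x - u y‖ ≤ ‖x - y‖) →
        (∀ x ∈ A, ‖v x - u x‖ ≤ δ) →
        ∃ uext : EuclideanSpace ℝ (Fin n) → EuclideanSpace ℝ (Fin m),
          (∀ x y : EuclideanSpace ℝ (Fin n), ‖uext x - uext y‖ ≤ ‖x - y‖) ∧
          (∀ x ∈ A, uext x = u x) ∧
          (∀ x : EuclideanSpace ℝ (Fin n), ‖v x - uext x‖ ≤ δ)) ↔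
    ((∀ x y : EuclideanSpace ℝ (Fin n), ∀ t ∈ Set.Icc (0 : ℝ) 1,
        v (t • x + (1 - t) • y) = t • v x + (1 - t) • v y) ∧
      (∀ x y : EuclideanSpace ℝ (Fin n), ‖v x - v y‖ ≤ ‖x - y‖)) := by
  constructor
  · intro H
    have hlip : ∀ x y : EuclideanSpace ℝ (Fin n), ‖v x - v y‖ ≤ ‖x - y‖ := by
      intro x y
      refine le_of_forall_pos_le_add fun ε hε => ?_
      obtain ⟨w, h1, -, h3⟩ := H (ε / 2) (by positivity) ∅ v (by simp) (by simp)
      have e : v x - v y = (v x - w x) + (w x - w y) - (v y - w y) := by abel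
      rw [e]
      have a1 := norm_sub_le ((v x - w x) + (w x - w y)) (v y - w y)
      have a2 := norm_add_le (v x - w x) (w x - w y)
      linarith [h1 x y, h3 x, h3 y]
    refine ⟨fun x y t ht => ?_, hlip⟩
    by_cases hxy : x = y
    · subst hxy
      rw [← add_smul, ← add_smul]; simp
    set z := t • x + (1 - t) • y with hz
    by_contra hne
    set e := v z - (t • v x + (1 - t) • v y) with he
    have he0 : 0 < ‖e‖ := norm_pos_iff.2 (sub_ne_zero.2 hne)
    obtain ⟨f, hf, hef⟩ := aux_perp m hm e
    obtain ⟨s, hs⟩ := aux_stretch (v x - v y) f _ hf (hlip x y)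
    let R : ℝ := s ^ 2 / ‖e‖ ^ 2 + 1
    have hR : 0 < R := by positivity
    have hRe : R * ‖e‖ ^ 2 = s ^ 2 + ‖e‖ ^ 2 := by simp only [R]; field_simp
    let p := (-R) • e + (s / 2) • f
    let q := (-R) • e + (-(s / 2)) • f
    have hp : ‖p‖ ^ 2 = R ^ 2 * ‖e‖ ^ 2 + s ^ 2 / 4 := by
      simp only [p]; rw [aux_pyth e f _ _ hf hef]; ring
    have hq : ‖q‖ ^ 2 = R ^ 2 * ‖e‖ ^ 2 + s ^ 2 / 4 := by
      simp only [q]; rw [aux_pyth e f _ _ hf hef]; ring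
    have hpq : ‖q‖ = ‖p‖ := by
      rw [← hp] at hq
      exact (sq_eq_sq₀ (norm_nonneg _) (norm_nonneg _)).1 hq
    have hp0 : 0 < ‖p‖ := by
      have : 0 < ‖p‖ ^ 2 := by rw [hp]; positivity
      exact lt_of_le_of_ne (norm_nonneg _) fun h => by rw [← h] at this; norm_num at this
    let u : EuclideanSpace ℝ (Fin n) → EuclideanSpace ℝ (Fin m) :=
      fun a => if a = x then v x + p else v y + q
    have hux : u x = v x + p := if_pos rfl
    have huy : u y = v y + q := if_neg (Ne.symm hxy)
    have huxy : ‖u x - u y‖ = ‖x - y‖ := by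
      rw [hux, huy, ← hs]; congr 1; simp only [p, q]; module
    obtain ⟨w, h1, h2, h3⟩ := H ‖p‖ hp0 {x, y} u
      (by
        rintro a (rfl | rfl) b (rfl | rfl)
        · simp
        · exact huxy.le
        · rw [norm_sub_rev, norm_sub_rev a]; exact huxy.le
        · simp)
      (by
        rintro a (rfl | rfl)
        · rw [hux]; simp
        · rw [huy]; simp [hpq])
    have hwx := h2 x (by simp)
    have hwy := h2 y (by simp)
    have hwz : w z = t • u x + (1 - t) • u y := by
      refine aux_interp _ _ _ t ‖x - y‖ ht ?_ ?_ huxy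
      · rw [← hwx]
        refine (h1 z x).trans (le_of_eq ?_)
        rw [show z - x = (1 - t) • (y - x) by rw [hz]; module, norm_smul, norm_sub_rev y,
          Real.norm_eq_abs, abs_of_nonneg (by linarith [ht.2])]
      · rw [← hwy]
        refine (h1 z y).trans (le_of_eq ?_)
        rw [show z - y = t • (x - y) by rw [hz]; module, norm_smul,
          Real.norm_eq_abs, abs_of_nonneg ht.1]
    have h4 := h3 z
    have e5 : v z - w z = (1 + R) • e + (-((t - 1 / 2) * s)) • f := by
      have : v z = e + (t • v x + (1 - t) • v y) := by rw [he]; abel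
      rw [hwz, hux, huy, this]; simp only [p, q]; module
    have h6 : ‖v z - w z‖ ^ 2 ≤ ‖p‖ ^ 2 := by gcongr
    rw [e5, aux_pyth e f _ _ hf hef, hp] at h6
    nlinarith [sq_nonneg ((t - 1 / 2) * s), sq_nonneg s]
  · rintro ⟨ha, hl⟩ δ hδ A u hu hA
    obtain ⟨T, hT⟩ := aux_linear v ha hl
    exact aux_extend T (fun y => by
      have := hl y 0
      rw [hT] at this
      simpa using this) v hT δ hδ.le A u hu hA
end

section
/- Let Y be an arbitrary set, let v : Y → ℝᵐ be a map, let A ⊆ Y, let u : A → ℝᵐ satisfy ‖u(x) − u(y)‖ ≤ ‖v(x) − v(y)‖ for all x, y ∈ A, and let δ ≥ 0 satisfy ‖v(x) − u(x)‖ ≤ δ for all x ∈ A. Then there exists ũ : Y → ℝᵐ with ũ(x) = u(x) for all x ∈ A, ‖ũ(x) − ũ(y)‖ ≤ ‖v(x) − v(y)‖ for all x, y ∈ Y, and ‖v(x) − ũ(x)‖ ≤ δ for all x ∈ Y. -/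
theorem aux_min {E : Type*} [NormedAddCommGroup E] [InnerProductSpace ℝ E]
    {κ : Type*} [Fintype κ] [Nonempty κ] (c : κ → E) (ρ : κ → ℝ)
    (H : ∀ l ∈ stdSimplex ℝ κ, ∑ i, l i * (‖c i‖ ^ 2 - ρ i) ≤ ‖∑ i, l i • c i‖ ^ 2) :
    ∃ w : E, ∀ j, ‖w - c j‖ ^ 2 ≤ ρ j := by
  classical
  have hne : (stdSimplex ℝ κ).Nonempty :=
    ⟨_, single_mem_stdSimplex ℝ (Classical.arbitrary κ)⟩
  obtain ⟨l, hl, hmax⟩ := (isCompact_stdSimplex ℝ κ).exists_isMaxOn hne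
    (f := fun l => ∑ i, l i * (‖c i‖ ^ 2 - ρ i) - ‖∑ i, l i • c i‖ ^ 2) (by fun_prop)
  have hG := H l hl
  set w := ∑ i, l i • c i with hw
  set G := ∑ i, l i * (‖c i‖ ^ 2 - ρ i) with hGdef
  refine ⟨w, fun j => ?_⟩
  have key : ∀ t : ℝ, 0 < t → t ≤ 1 →
      (‖c j‖ ^ 2 - ρ j) - G ≤ 2 * inner ℝ w (c j - w) + t * ‖c j - w‖ ^ 2 := by
    intro t ht ht1
    have hmem : (1 - t) • l + t • (Pi.single j 1 : κ → ℝ) ∈ stdSimplex ℝ κ :=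
      convex_stdSimplex ℝ κ hl (single_mem_stdSimplex ℝ j) (by linarith) ht.le (by ring)
    have h1 := hmax hmem
    simp only [Set.mem_ofPred_eq] at h1
    have e1 : ∑ i, ((1 - t) • l + t • (Pi.single j 1 : κ → ℝ)) i * (‖c i‖ ^ 2 - ρ i)
        = (1 - t) * G + t * (‖c j‖ ^ 2 - ρ j) := by
      simp only [Pi.add_apply, Pi.smul_apply, smul_eq_mul, add_mul, Finset.sum_add_distrib,
        mul_assoc, ← Finset.mul_sum]
      simp [Pi.single_apply, hGdef]
    have e2 : ∑ i, ((1 - t) • l + t • (Pi.single j 1 : κ → ℝ)) i • c i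
        = w + t • (c j - w) := by
      simp only [Pi.add_apply, Pi.smul_apply, smul_eq_mul, add_smul, Finset.sum_add_distrib,
        mul_smul, ← Finset.smul_sum]
      simp only [← hw, Pi.single_apply, ite_smul, one_smul, zero_smul, Finset.sum_ite_eq',
        Finset.mem_univ, if_true]
      module
    rw [e1, e2, ← hw, ← hGdef, norm_add_sq_real, inner_smul_right, norm_smul, mul_pow,
      Real.norm_eq_abs, sq_abs] at h1
    have : t * ((‖c j‖ ^ 2 - ρ j) - G) ≤
        t * (2 * inner ℝ w (c j - w) + t * ‖c j - w‖ ^ 2) := by nlinarith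
    exact le_of_mul_le_mul_left this ht
  have lim : (‖c j‖ ^ 2 - ρ j) - G ≤ 2 * inner ℝ w (c j - w) := by
    refine le_of_forall_pos_le_add fun ε hε => ?_
    set K := ‖c j - w‖ ^ 2 with hK
    have hK0 : 0 ≤ K := by positivity
    have h := key (min 1 (ε / (K + 1))) (by positivity) (min_le_left _ _)
    have h2 : min 1 (ε / (K + 1)) * K ≤ ε := by
      calc _ ≤ ε / (K + 1) * K := by gcongr; exact min_le_right _ _
        _ ≤ ε / (K + 1) * (K + 1) := by gcongr; linarith
        _ = ε := by field_simp
    linarith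
  rw [inner_sub_right, real_inner_self_eq_norm_sq] at lim
  rw [norm_sub_sq_real]
  linarith

theorem aux_var {E : Type*} [NormedAddCommGroup E] [InnerProductSpace ℝ E]
    {ι : Type*} [Fintype ι] (l : ι → ℝ) (f : ι → E) :
    ∑ i, ∑ j, l i * l j * ‖f i - f j‖ ^ 2
      = 2 * ((∑ i, l i) * ∑ i, l i * ‖f i‖ ^ 2) - 2 * ‖∑ i, l i • f i‖ ^ 2 := by
  have e : ‖∑ i, l i • f i‖ ^ 2 = ∑ i, ∑ j, l i * l j * inner ℝ (f i) (f j) := by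
    rw [← real_inner_self_eq_norm_sq, sum_inner]
    refine Finset.sum_congr rfl fun i _ => ?_
    rw [inner_sum]
    refine Finset.sum_congr rfl fun j _ => ?_
    rw [inner_smul_left, inner_smul_right]
    simp [mul_assoc]
  have e1 : (∑ i, l i) * ∑ i, l i * ‖f i‖ ^ 2 = ∑ i, ∑ j, l i * l j * ‖f j‖ ^ 2 := by
    rw [Finset.sum_mul_sum]
    simp only [mul_assoc]
  have e2 : (∑ i, l i) * ∑ i, l i * ‖f i‖ ^ 2 = ∑ i, ∑ j, l i * l j * ‖f i‖ ^ 2 := by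
    rw [e1, Finset.sum_comm]
    simp only [mul_comm (l _) (l _)]
  rw [two_mul ((∑ i, l i) * _)]
  nth_rewrite 1 [e1]
  rw [e2, e, Finset.mul_sum, ← Finset.sum_add_distrib, ← Finset.sum_sub_distrib]
  refine Finset.sum_congr rfl fun i _ => ?_
  rw [Finset.mul_sum, ← Finset.sum_add_distrib, ← Finset.sum_sub_distrib]
  refine Finset.sum_congr rfl fun j _ => ?_
  rw [norm_sub_sq_real]
  ring

theorem aux_fin {E : Type*} [NormedAddCommGroup E] [InnerProductSpace ℝ E]
    {ι : Type*} [Fintype ι] (f q : ι → E) (δ : ℝ)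
    (h1 : ∀ i j, ‖f i - f j‖ ≤ ‖q i - q j‖) (h2 : ∀ i, ‖f i - q i‖ ≤ δ) :
    ∃ w : E, ‖w‖ ^ 2 ≤ δ ^ 2 ∧ ∀ i, ‖w - f i‖ ^ 2 ≤ ‖q i‖ ^ 2 := by
  obtain ⟨w, hw⟩ := aux_min (κ := Option ι) (fun o => o.elim 0 f)
    (fun o => o.elim (δ ^ 2) (fun i => ‖q i‖ ^ 2)) (by
      rintro l ⟨hl0, hl1⟩
      rw [Fintype.sum_option] at hl1
      simp only [Fintype.sum_option, Option.elim, smul_zero, zero_add, norm_zero]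
      have hμ := hl0 none
      have hk : ∀ i, 0 ≤ l (some i) := fun i => hl0 (some i)
      generalize l none = μ at *
      generalize hk' : (fun i => l (some i)) = k
      have hkk : ∀ i, l (some i) = k i := fun i => congrFun hk' i
      simp only [hkk] at *
      have vf := aux_var k f
      have vq := aux_var k q
      have vd := aux_var k (fun i => f i - q i)
      have le1 : ∑ i, ∑ j, k i * k j * ‖f i - f j‖ ^ 2 ≤ ∑ i, ∑ j, k i * k j * ‖q i - q j‖ ^ 2 := by
        refine Finset.sum_le_sum fun i _ => Finset.sum_le_sum fun j _ => ?_
        have := h1 i j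
        have := mul_nonneg (hk i) (hk j)
        gcongr
      have le2 : 0 ≤ ∑ i, ∑ j, k i * k j * ‖(f i - q i) - (f j - q j)‖ ^ 2 := by
        refine Finset.sum_nonneg fun i _ => Finset.sum_nonneg fun j _ => ?_
        have := mul_nonneg (hk i) (hk j)
        positivity
      have le3 : ∑ i, k i * ‖f i - q i‖ ^ 2 ≤ (∑ i, k i) * δ ^ 2 := by
        rw [Finset.sum_mul]
        refine Finset.sum_le_sum fun i _ => ?_
        have := h2 i
        have := hk i
        gcongr
      have hL : 0 ≤ ∑ i, k i := Finset.sum_nonneg fun i _ => hk i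
      have z : ∑ i, k i = 0 → ∀ i, k i = 0 := fun h i =>
        (Finset.sum_eq_zero_iff_of_nonneg (fun i _ => hk i)).1 h i (Finset.mem_univ i)
      simp only [smul_sub, mul_sub, Finset.sum_sub_distrib] at vd ⊢
      rcases hL.eq_or_lt with h0 | hpos
      · simp only [z h0.symm]
        simp
        positivity
      have sq := sq_nonneg ‖(∑ i, k i • q i) - μ • ∑ i, k i • f i‖
      rw [vd] at le2
      rw [vf, vq] at le1
      generalize ∑ i, k i • q i = Q at *
      generalize ∑ i, k i • f i = F at *
      generalize ∑ i, k i * ‖f i‖ ^ 2 = a at *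
      generalize ∑ i, k i * ‖q i‖ ^ 2 = b at *
      generalize ∑ i, k i * ‖f i - q i‖ ^ 2 = d at *
      generalize ∑ i, k i = L at *
      rw [norm_sub_sq_real, inner_smul_right, norm_smul, mul_pow, Real.norm_eq_abs, sq_abs,
        real_inner_comm] at sq
      rw [norm_sub_sq_real] at le2
      generalize (inner ℝ F Q : ℝ) = x at *
      generalize ‖F‖ ^ 2 = FF at *
      generalize ‖Q‖ ^ 2 = QQ at *
      have hLe : L = 1 - μ := by linarith
      have s1 : FF - 2 * x + QQ ≤ L * (L * δ ^ 2) := by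
        have := mul_le_mul_of_nonneg_left le3 hL
        linarith
      have s2 := mul_le_mul_of_nonneg_left s1 hμ
      have s3 : L * (L * a - FF) ≤ L * (L * b - QQ) :=
        mul_le_mul_of_nonneg_left (by linarith) hL
      have : L ^ 2 * (μ * 0 ^ 2 - μ * δ ^ 2 + (a - b)) ≤ L ^ 2 * FF := by
        have e : L * (FF - QQ) - μ * (FF - 2 * x + QQ) ≤ L ^ 2 * FF := by
          subst hLe
          nlinarith
        nlinarith
      exact le_of_mul_le_mul_left this (by positivity))
  refine ⟨w, by simpa using hw none, fun i => hw (some i)⟩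

theorem aux_ext {m : ℕ} {ι : Type*} (f q : ι → EuclideanSpace ℝ (Fin m))
    (z : EuclideanSpace ℝ (Fin m)) (δ : ℝ) (hδ : 0 ≤ δ)
    (h1 : ∀ i j, ‖f i - f j‖ ≤ ‖q i - q j‖) (h2 : ∀ i, ‖q i - f i‖ ≤ δ) :
    ∃ w, ‖z - w‖ ≤ δ ∧ ∀ i, ‖w - f i‖ ≤ ‖z - q i‖ := by
  have := (isCompact_closedBall z δ).inter_iInter_nonempty
    (fun i => Metric.closedBall (f i) ‖z - q i‖) (fun i => Metric.isClosed_closedBall) (by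
      intro s
      obtain ⟨w, hw, hw'⟩ := aux_fin (ι := s) (fun i => f i - z) (fun i => q i - z) δ
        (by intro i j; simpa using h1 i j)
        (by intro i; simpa [norm_sub_rev] using h2 i)
      refine ⟨w + z, ?_, ?_⟩
      · simpa using abs_le_of_sq_le_sq hw hδ |> fun h => (le_abs_self _).trans h
      · simp only [Set.mem_iInter, Metric.mem_closedBall, dist_eq_norm]
        intro i hi
        have h := hw' ⟨i, hi⟩
        have h := le_of_sq_le_sq h (norm_nonneg _)
        rw [norm_sub_rev z]
        have e : w + z - f i = w - (f i - z) := by abel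
        rw [e]
        exact h)
  obtain ⟨w, hw, hw'⟩ := this
  simp only [Set.mem_iInter, Metric.mem_closedBall, dist_eq_norm] at hw hw'
  exact ⟨w, by rwa [norm_sub_rev], hw'⟩

theorem stmt_16 (m : ℕ) {Y : Type*} (v : Y → EuclideanSpace ℝ (Fin m))
    (A : Set Y) (u : Y → EuclideanSpace ℝ (Fin m))
    (hu : ∀ x ∈ A, ∀ y ∈ A, ‖u x - u y‖ ≤ ‖v x - v y‖)
    (δ : ℝ) (hδ : 0 ≤ δ) (hclose : ∀ x ∈ A, ‖v x - u x‖ ≤ δ) :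
    ∃ uext : Y → EuclideanSpace ℝ (Fin m),
      (∀ x ∈ A, uext x = u x) ∧
      (∀ x y : Y, ‖uext x - uext y‖ ≤ ‖v x - v y‖) ∧
      (∀ x : Y, ‖v x - uext x‖ ≤ δ) := by
  obtain ⟨S, hS⟩ : ∃ S : Set (Set (Y × EuclideanSpace ℝ (Fin m))), ∀ G, G ∈ S ↔
      (∀ p ∈ G, ∀ q ∈ G, ‖p.2 - q.2‖ ≤ ‖v p.1 - v q.1‖) ∧ ∀ p ∈ G, ‖v p.1 - p.2‖ ≤ δ :=
    ⟨{G | (∀ p ∈ G, ∀ q ∈ G, ‖p.2 - q.2‖ ≤ ‖v p.1 - v q.1‖) ∧ ∀ p ∈ G, ‖v p.1 - p.2‖ ≤ δ},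
      fun _ => Iff.rfl⟩
  obtain ⟨G, hG0, hG⟩ := zorn_subset_nonempty S (by
    intro c hc hch _
    refine ⟨⋃₀ c, (hS _).2 ⟨?_, ?_⟩, fun s hs => Set.subset_sUnion_of_mem hs⟩
    · rintro p ⟨s, hs, hp⟩ q ⟨t, ht, hq⟩
      rcases hch.total hs ht with h | h
      · exact ((hS _).1 (hc ht)).1 p (h hp) q hq
      · exact ((hS _).1 (hc hs)).1 p hp q (h hq)
    · rintro p ⟨s, hs, hp⟩
      exact ((hS _).1 (hc hs)).2 p hp) ((fun x => (x, u x)) '' A) (by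
    refine (hS _).2 ⟨?_, ?_⟩
    · rintro _ ⟨x, hx, rfl⟩ _ ⟨y, hy, rfl⟩
      exact hu x hx y hy
    · rintro _ ⟨x, hx, rfl⟩
      exact hclose x hx)
  have hGS := (hS G).1 hG.prop
  have tot : ∀ x, ∃ w, (x, w) ∈ G := by
    intro x
    obtain ⟨w, hw, hw'⟩ := aux_ext (ι := G) (fun p => p.1.2) (fun p => v p.1.1) (v x) δ hδ
      (fun p q => hGS.1 p p.2 q q.2) (fun p => hGS.2 p p.2)
    refine ⟨w, ?_⟩
    have hins : insert (x, w) G ∈ S := by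
      refine (hS _).2 ⟨?_, ?_⟩
      · rintro p (rfl | hp) q (rfl | hq)
        · simp
        · exact hw' ⟨q, hq⟩
        · rw [norm_sub_rev, norm_sub_rev (v _)]
          exact hw' ⟨p, hp⟩
        · exact hGS.1 p hp q hq
      · rintro p (rfl | hp)
        · exact hw
        · exact hGS.2 p hp
    exact hG.le_of_ge hins (Set.subset_insert _ _) (Set.mem_insert _ _)
  choose g hg using tot
  refine ⟨g, fun x hx => ?_, fun x y => hGS.1 (x, g x) (hg x) (y, g y) (hg y),
    fun x => hGS.2 (x, g x) (hg x)⟩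
  have hm : (x, u x) ∈ G := hG0 (Set.mem_image_of_mem (fun x => (x, u x)) hx)
  have h3 : ‖g x - u x‖ ≤ ‖v x - v x‖ := hGS.1 (x, g x) (hg x) (x, u x) hm
  rw [sub_self, norm_zero] at h3
  exact sub_eq_zero.1 (norm_le_zero_iff.1 h3)
end
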